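/- One-variable residue expansion: for distinct indeterminates x_1, ..., x_n and parameters q, t, the rational function identity Φ(z : X) − 1 = ((1−t)/(1−q)) ∑_{i=1}^n ( w(z : x_i) Φ(X − x_i : x_i) − W(z : x_i) Φ(x_i : X − x_i) ) holds, where for single letters w(z : x) = (z − x/t)/(z − x/q), W(z : x) = (z − qx/t)/(z − x), Φ(z : X) = ∏_{i} ((z − t x_i/q)(z − x_i/t))/((z − x_i)(z − x_i/q)), Φ(X−x_i : x_i) = ∏_{j≠i} ((x_j − t x_i/q)(x_j − x_i/t))/((x_j − x_i)(x_j − x_i/q)), and Φ(x_i : X−x_i) = ∏_{j≠i} ((x_i − t x_j/q)(x_i − x_j/t))/((x_i − x_j)(x_i − x_j/q)). -/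

import Mathlib

/-- The field of rational functions in the indeterminates `x_1, …, x_n, z, q, t`. -/
noncomputable abbrev RatFld (n : ℕ) : Type :=
  FractionRing (MvPolynomial (Fin n ⊕ Fin 3) ℚ)

/-- The indeterminate `x_i` as a rational function. -/
noncomputable def xv (n : ℕ) (i : Fin n) : RatFld n :=
  algebraMap (MvPolynomial (Fin n ⊕ Fin 3) ℚ) (RatFld n) (MvPolynomial.X (Sum.inl i))

/-- The indeterminate `z` as a rational function. -/
noncomputable def zv (n : ℕ) : RatFld n :=
  algebraMap (MvPolynomial (Fin n ⊕ Fin 3) ℚ) (RatFld n) (MvPolynomial.X (Sum.inr 0))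

/-- The parameter `q` as a rational function. -/
noncomputable def qv (n : ℕ) : RatFld n :=
  algebraMap (MvPolynomial (Fin n ⊕ Fin 3) ℚ) (RatFld n) (MvPolynomial.X (Sum.inr 1))

/-- The parameter `t` as a rational function. -/
noncomputable def tv (n : ℕ) : RatFld n :=
  algebraMap (MvPolynomial (Fin n ⊕ Fin 3) ℚ) (RatFld n) (MvPolynomial.X (Sum.inr 2))

open Polynomial in
lemma partial_fractions_aux {K ι : Type*} [Field K] [Fintype ι] [DecidableEq ι]
    (v b : ι → K) (hv : Function.Injective v) (z : K) (hz : ∀ i, z ≠ v i) :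
    (∏ i, (z - b i) / (z - v i)) - 1 =
      ∑ i, (∏ j, (v i - b j)) * (∏ j ∈ Finset.univ.erase i, (v i - v j)⁻¹) * (z - v i)⁻¹ := by
  have hD : (∏ i, (z - v i)) ≠ 0 := Finset.prod_ne_zero_iff.2 fun i _ => sub_ne_zero.2 (hz i)
  set f : K[X] := Lagrange.nodal Finset.univ b - Lagrange.nodal Finset.univ v with hf
  have hdeg : f.degree < (Finset.univ : Finset ι).card := by
    have h := Polynomial.degree_sub_lt_left (p := Lagrange.nodal Finset.univ b)
      (q := Lagrange.nodal Finset.univ v)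
      (by rw [Lagrange.degree_nodal, Lagrange.degree_nodal]) Lagrange.nodal_ne_zero
      (by rw [Lagrange.nodal_monic.leadingCoeff, Lagrange.nodal_monic.leadingCoeff])
    rwa [Lagrange.degree_nodal] at h
  have h1 := Lagrange.eq_interpolate (s := Finset.univ) (v := v) (hv.injOn) hdeg
  have h2 := congrArg (Polynomial.eval z) h1
  rw [Lagrange.eval_interpolate_not_at_node _ (fun i _ => hz i)] at h2
  have h3 : ∀ i, Polynomial.eval (v i) f = ∏ j, (v i - b j) := by
    intro i
    rw [hf, Polynomial.eval_sub, Lagrange.eval_nodal_at_node (Finset.mem_univ i), sub_zero,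
      Lagrange.eval_nodal]
  simp only [h3] at h2
  rw [hf, Polynomial.eval_sub, Lagrange.eval_nodal, Lagrange.eval_nodal] at h2
  rw [Finset.prod_div_distrib, div_sub_one hD, h2, mul_div_cancel_left₀ _ hD]
  refine Finset.sum_congr rfl fun i _ => ?_
  rw [Lagrange.nodalWeight]
  ring

lemma prod_erase_inl_aux {K : Type*} [Field K] {n : ℕ} (g : Fin n ⊕ Fin n → K) (i : Fin n) :
    ∏ j ∈ Finset.univ.erase (Sum.inl i), g j =
      g (Sum.inr i) * ∏ j ∈ Finset.univ.erase i, (g (Sum.inl j) * g (Sum.inr j)) := by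
  have h : (Finset.univ.erase (Sum.inl i) : Finset (Fin n ⊕ Fin n)) =
      (Finset.univ.erase i).disjSum Finset.univ := by
    ext a; cases a <;> simp
  rw [h, Finset.prod_disjSum, Finset.prod_mul_distrib,
    ← Finset.mul_prod_erase Finset.univ (fun j => g (Sum.inr j)) (Finset.mem_univ i)]
  ring

lemma prod_erase_inr_aux {K : Type*} [Field K] {n : ℕ} (g : Fin n ⊕ Fin n → K) (i : Fin n) :
    ∏ j ∈ Finset.univ.erase (Sum.inr i), g j =
      g (Sum.inl i) * ∏ j ∈ Finset.univ.erase i, (g (Sum.inl j) * g (Sum.inr j)) := by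
  have h : (Finset.univ.erase (Sum.inr i) : Finset (Fin n ⊕ Fin n)) =
      Finset.univ.disjSum (Finset.univ.erase i) := by
    ext a; cases a <;> simp
  rw [h, Finset.prod_disjSum, Finset.prod_mul_distrib,
    ← Finset.mul_prod_erase Finset.univ (fun j => g (Sum.inl j)) (Finset.mem_univ i)]
  ring

lemma prod_sum_aux {K : Type*} [Field K] {n : ℕ} (g : Fin n ⊕ Fin n → K) (i : Fin n) :
    ∏ j, g j = g (Sum.inl i) * g (Sum.inr i) *
      ∏ j ∈ Finset.univ.erase i, (g (Sum.inl j) * g (Sum.inr j)) := by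
  rw [Fintype.prod_sum_type, ← Finset.prod_mul_distrib,
    Finset.mul_prod_erase Finset.univ (fun j => g (Sum.inl j) * g (Sum.inr j)) (Finset.mem_univ i)]

/-- `Φ(z : X) - 1` as a sum over the poles. -/
lemma poles_aux {K : Type*} [Field K] {n : ℕ} (x : Fin n → K) (q t z : K)
    (hq : q ≠ 0) (ht : t ≠ 0) (hq1 : 1 - q ≠ 0) (hx0 : ∀ i, x i ≠ 0)
    (hx : ∀ i j, i ≠ j → x i - x j ≠ 0) (hqx : ∀ i j, q * x i - x j ≠ 0)
    (hz : ∀ i, z - x i ≠ 0) (hqz : ∀ i, q * z - x i ≠ 0) :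
    (∏ i, ((z - t * x i / q) * (z - x i / t)) / ((z - x i) * (z - x i / q))) - 1 =
      (1 - t) * (1 - q / t) / (1 - q) * ∑ i,
        ((x i / q) / (z - x i / q) * ∏ j ∈ Finset.univ.erase i,
            ((x j - t * x i / q) * (x j - x i / t)) / ((x j - x i) * (x j - x i / q)) -
          x i / (z - x i) * ∏ j ∈ Finset.univ.erase i,
            ((x i - t * x j / q) * (x i - x j / t)) / ((x i - x j) * (x i - x j / q))) := by
  have hdq : ∀ a c : K, q * a - c ≠ 0 → a - c / q ≠ 0 := by
    intro a c h h'
    apply h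
    rw [sub_eq_zero] at h' ⊢
    rw [h']; field_simp
  have hv : Function.Injective (Sum.elim x (fun i => x i / q)) := by
    rintro (i | i) (j | j) h <;> simp only [Sum.elim_inl, Sum.elim_inr] at h
    · by_contra hne
      exact hx i j (fun e => hne (by rw [e])) (sub_eq_zero.2 h)
    · exact absurd (sub_eq_zero.2 h) (hdq _ _ (hqx i j))
    · exact absurd (sub_eq_zero.2 h.symm) (hdq _ _ (hqx j i))
    · by_contra hne
      refine hx i j (fun e => hne (by rw [e])) (sub_eq_zero.2 ?_)
      exact (div_left_inj' hq).1 h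
  have hzv : ∀ i, z ≠ Sum.elim x (fun i => x i / q) i := by
    rintro (i | i)
    · exact sub_ne_zero.1 (hz i)
    · exact sub_ne_zero.1 (hdq _ _ (hqz i))
  have key := partial_fractions_aux (Sum.elim x (fun i => x i / q))
    (Sum.elim (fun i => t * x i / q) (fun i => x i / t)) hv z hzv
  rw [Fintype.prod_sum_type, ← Finset.prod_mul_distrib, Fintype.sum_sum_type,
    ← Finset.sum_add_distrib] at key
  simp only [Sum.elim_inl, Sum.elim_inr] at key
  simp only [mul_div_mul_comm] at key ⊢
  rw [key, Finset.mul_sum]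
  refine Finset.sum_congr rfl fun i _ => ?_
  rw [prod_erase_inl_aux, prod_erase_inr_aux, prod_sum_aux _ i, prod_sum_aux _ i]
  simp only [Sum.elim_inl, Sum.elim_inr]
  have e1 : ∏ j ∈ Finset.univ.erase i, ((x i - t * x j / q) / (x i - x j) *
        ((x i - x j / t) / (x i - x j / q))) =
      (∏ j ∈ Finset.univ.erase i, ((x i - t * x j / q) * (x i - x j / t))) *
      ∏ j ∈ Finset.univ.erase i, ((x i - x j)⁻¹ * (x i - x j / q)⁻¹) := by
    rw [← Finset.prod_mul_distrib]
    refine Finset.prod_congr rfl fun j _ => ?_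
    simp only [div_eq_mul_inv]; ring
  have e2 : ∏ j ∈ Finset.univ.erase i, ((x j - t * x i / q) / (x j - x i) *
        ((x j - x i / t) / (x j - x i / q))) =
      (∏ j ∈ Finset.univ.erase i, ((x i / q - t * x j / q) * (x i / q - x j / t))) *
      ∏ j ∈ Finset.univ.erase i, ((x i / q - x j)⁻¹ * (x i / q - x j / q)⁻¹) := by
    rw [← Finset.prod_mul_distrib]
    refine Finset.prod_congr rfl fun j hj => ?_
    have hji : j ≠ i := Finset.ne_of_mem_erase hj
    have a1 := hx j i hji
    have a2 := hx i j hji.symm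
    have a3 := hdq _ _ (hqx j i)
    have a4 : x i / q - x j ≠ 0 := by rw [← neg_sub]; exact neg_ne_zero.2 a3
    have a5 : x i / q - x j / q ≠ 0 := by rw [← sub_div]; exact div_ne_zero a2 hq
    rw [← mul_inv, ← div_eq_mul_inv, div_mul_div_comm,
      div_eq_div_iff (mul_ne_zero a1 a3) (mul_ne_zero a4 a5)]
    field_simp
    ring
  rw [e1, e2]
  generalize (∏ j ∈ Finset.univ.erase i, ((x i - t * x j / q) * (x i - x j / t))) = A
  generalize (∏ j ∈ Finset.univ.erase i, ((x i - x j)⁻¹ * (x i - x j / q)⁻¹)) = B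
  generalize (∏ j ∈ Finset.univ.erase i,
    ((x i / q - t * x j / q) * (x i / q - x j / t))) = C
  generalize (∏ j ∈ Finset.univ.erase i,
    ((x i / q - x j)⁻¹ * (x i / q - x j / q)⁻¹)) = D
  have hxi := hx0 i
  have c1 : (x i - t * x i / q) * (x i - x i / t) * (x i - x i / q)⁻¹ =
      -((1 - t) * (1 - q / t) / (1 - q) * x i) := by
    have h : x i - x i / q = -(x i * (1 - q) / q) := by field_simp; ring
    rw [h]; field_simp; ring
  have c2 : (x i / q - t * x i / q) * (x i / q - x i / t) * (x i / q - x i)⁻¹ =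
      (1 - t) * (1 - q / t) / (1 - q) * (x i / q) := by
    have h : x i / q - x i = x i * (1 - q) / q := by field_simp
    rw [h]; field_simp
  linear_combination (A * B * (z - x i)⁻¹) * c1 + (C * D * (z - x i / q)⁻¹) * c2

lemma expansion_aux {K : Type*} [Field K] {n : ℕ} (x : Fin n → K) (q t z : K)
    (hq : q ≠ 0) (ht : t ≠ 0) (hq1 : 1 - q ≠ 0) (hx0 : ∀ i, x i ≠ 0)
    (hx : ∀ i j, i ≠ j → x i - x j ≠ 0) (hqx : ∀ i j, q * x i - x j ≠ 0)
    (hz : ∀ i, z - x i ≠ 0) (hqz : ∀ i, q * z - x i ≠ 0) (ht1 : 1 - t ≠ 0) (hqt : t - q ≠ 0) :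
    (∏ i, ((z - t * x i / q) * (z - x i / t)) / ((z - x i) * (z - x i / q))) - 1 =
      (1 - t) / (1 - q) * ∑ i,
        ((z - x i / t) / (z - x i / q) * ∏ j ∈ Finset.univ.erase i,
            ((x j - t * x i / q) * (x j - x i / t)) / ((x j - x i) * (x j - x i / q)) -
          (z - q * x i / t) / (z - x i) * ∏ j ∈ Finset.univ.erase i,
            ((x i - t * x j / q) * (x i - x j / t)) / ((x i - x j) * (x i - x j / q))) := by
  have h0 := poles_aux x q t 0 hq ht hq1 hx0 hx hqx (by simpa using hx0) (by simpa using hx0)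
  rw [poles_aux x q t z hq ht hq1 hx0 hx hqx hz hqz]
  set P : Fin n → K := fun i => ∏ j ∈ Finset.univ.erase i,
    ((x j - t * x i / q) * (x j - x i / t)) / ((x j - x i) * (x j - x i / q)) with hP
  set Q : Fin n → K := fun i => ∏ j ∈ Finset.univ.erase i,
    ((x i - t * x j / q) * (x i - x j / t)) / ((x i - x j) * (x i - x j / q)) with hQ
  have hone : (∏ i, ((0 - t * x i / q) * (0 - x i / t)) / ((0 - x i) * (0 - x i / q))) = 1 := by
    refine Finset.prod_eq_one fun i _ => ?_
    have := hx0 i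
    simp only [zero_sub, neg_mul_neg]
    field_simp
  rw [hone, sub_self] at h0
  have hc : (1 - t) * (1 - q / t) / (1 - q) ≠ 0 := by
    refine div_ne_zero (mul_ne_zero ht1 ?_) hq1
    rw [one_sub_div ht]
    exact div_ne_zero hqt ht
  have hs : ∑ i, (P i - Q i) = 0 := by
    have h1 := (mul_eq_zero.1 h0.symm).resolve_left hc
    rw [← neg_eq_zero, ← h1, ← Finset.sum_neg_distrib]
    refine Finset.sum_congr rfl fun i _ => ?_
    have a := hx0 i
    have e1 : (x i / q) / (0 - x i / q) = -1 := by field_simp; simp [a]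
    have e2 : x i / (0 - x i) = -1 := by field_simp; simp [a]
    rw [e1, e2]; ring
  have hw : ∀ i, (z - x i / t) / (z - x i / q) * P i - (z - q * x i / t) / (z - x i) * Q i =
      (P i - Q i) + (1 - q / t) * ((x i / q) / (z - x i / q) * P i - x i / (z - x i) * Q i) := by
    intro i
    have a := hz i
    have b : z - x i / q ≠ 0 := by
      rw [sub_div' hq, mul_comm]; exact div_ne_zero (hqz i) hq
    have e1 : (z - x i / t) / (z - x i / q) = 1 + (1 - q / t) * ((x i / q) / (z - x i / q)) := by
      rw [div_eq_iff b, add_mul, mul_assoc, div_mul_cancel₀ _ b]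
      field_simp; ring
    have e2 : (z - q * x i / t) / (z - x i) = 1 + (1 - q / t) * (x i / (z - x i)) := by
      rw [div_eq_iff a, add_mul, mul_assoc, div_mul_cancel₀ _ a]
      field_simp; ring
    rw [e1, e2]; ring
  change _ * ∑ i, ((x i / q) / (z - x i / q) * P i - x i / (z - x i) * Q i) =
    _ * ∑ i, ((z - x i / t) / (z - x i / q) * P i - (z - q * x i / t) / (z - x i) * Q i)
  simp only [hw]
  rw [Finset.sum_add_distrib, hs, zero_add, ← Finset.mul_sum]
  ring

lemma algebraMap_ne_zero_aux {n : ℕ} (p : MvPolynomial (Fin n ⊕ Fin 3) ℚ)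
    (f : Fin n ⊕ Fin 3 → ℚ) (h : MvPolynomial.eval f p ≠ 0) :
    algebraMap (MvPolynomial (Fin n ⊕ Fin 3) ℚ) (RatFld n) p ≠ 0 := by
  intro h'
  apply h
  rw [(IsFractionRing.injective (MvPolynomial (Fin n ⊕ Fin 3) ℚ) (RatFld n))
    (h'.trans (map_zero _).symm), map_zero]

/-- One-variable residue expansion:
`Φ(z : X) - 1 = ((1-t)/(1-q)) ∑_i ( w(z : x_i) Φ(X - x_i : x_i) - W(z : x_i) Φ(x_i : X - x_i) )`
where `w(z : x) = (z - x/t)/(z - x/q)`, `W(z : x) = (z - qx/t)/(z - x)`, and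
`Φ(A : B) = ∏_{a∈A, b∈B} ((a - tb/q)(a - b/t))/((a - b)(a - b/q))`, as an identity of
rational functions in `z, x_1, …, x_n, q, t`. -/
theorem one_variable_residue_expansion (n : ℕ) :
    (∏ i : Fin n,
        ((zv n - tv n * xv n i / qv n) * (zv n - xv n i / tv n)) /
          ((zv n - xv n i) * (zv n - xv n i / qv n))) - 1 =
      (1 - tv n) / (1 - qv n) *
        ∑ i : Fin n,
          (((zv n - xv n i / tv n) / (zv n - xv n i / qv n)) *
              ∏ j ∈ Finset.univ.erase i,
                ((xv n j - tv n * xv n i / qv n) * (xv n j - xv n i / tv n)) /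
                  ((xv n j - xv n i) * (xv n j - xv n i / qv n)) -
            ((zv n - qv n * xv n i / tv n) / (zv n - xv n i)) *
              ∏ j ∈ Finset.univ.erase i,
                ((xv n i - tv n * xv n j / qv n) * (xv n i - xv n j / tv n)) /
                  ((xv n i - xv n j) * (xv n i - xv n j / qv n))) := by
  refine expansion_aux (xv n) (qv n) (tv n) (zv n) ?_ ?_ ?_ ?_ ?_ ?_ ?_ ?_ ?_ ?_
  · exact algebraMap_ne_zero_aux _ (fun _ => 1) (by simp)
  · exact algebraMap_ne_zero_aux _ (fun _ => 1) (by simp)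
  · rw [qv, ← map_one (algebraMap (MvPolynomial (Fin n ⊕ Fin 3) ℚ) (RatFld n)), ← map_sub]
    exact algebraMap_ne_zero_aux _ (fun _ => 0) (by simp)
  · exact fun i => algebraMap_ne_zero_aux _ (fun _ => 1) (by simp)
  · intro i j hij
    rw [xv, xv, ← map_sub]
    exact algebraMap_ne_zero_aux _ (Pi.single (Sum.inl i) 1) (by simp [Pi.single_apply, hij.symm])
  · intro i j
    rw [xv, xv, qv, ← map_mul, ← map_sub]
    exact algebraMap_ne_zero_aux _ (Sum.elim (fun _ => 1) (fun _ => 0)) (by simp)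
  · intro i
    rw [xv, zv, ← map_sub]
    exact algebraMap_ne_zero_aux _ (Sum.elim (fun _ => 1) (fun _ => 0)) (by simp)
  · intro i
    rw [xv, zv, qv, ← map_mul, ← map_sub]
    exact algebraMap_ne_zero_aux _ (Sum.elim (fun _ => 1) (fun _ => 0)) (by simp)
  · rw [tv, ← map_one (algebraMap (MvPolynomial (Fin n ⊕ Fin 3) ℚ) (RatFld n)), ← map_sub]
    exact algebraMap_ne_zero_aux _ (fun _ => 0) (by simp)
  · rw [tv, qv, ← map_sub]
    exact algebraMap_ne_zero_aux _ (Pi.single (Sum.inr 2) 1) (by simp [Pi.single_apply])
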